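/- Let G be a hyperbolic group, let h ∈ G be an element of infinite order, and suppose there exist a ∈ G of infinite order and integers p, q such that h^q = a h^p a^{-1} in G. Then p = q. -/

import Mathlib

/-- The word metric on a group `G` with respect to a generating set `S`:
`wordDist S g h` is the least length of a word in `S ∪ S⁻¹` representing `g⁻¹ * h`. -/
noncomputable def wordDist {G : Type*} [Group G] (S : Set G) (g h : G) : ℝ :=
  sInf {r : ℝ | ∃ l : List G, (∀ x ∈ l, x ∈ S ∨ x⁻¹ ∈ S) ∧ l.prod = g⁻¹ * h ∧ r = l.length}

/-- The Gromov product `(x|y)_w` with respect to the word metric for `S`. -/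
noncomputable def gromovProd {G : Type*} [Group G] (S : Set G) (w x y : G) : ℝ :=
  (wordDist S x w + wordDist S y w - wordDist S x y) / 2

/-- A group is (Gromov) hyperbolic if it admits a finite generating set `S` such that
the word metric `d_S` satisfies the Gromov product four-point condition for some `δ ≥ 0`. -/
def IsHyperbolicGroup (G : Type*) [Group G] : Prop :=
  ∃ S : Set G, S.Finite ∧ Subgroup.closure S = ⊤ ∧
    ∃ δ : ℝ, 0 ≤ δ ∧ ∀ w x y z : G,
      gromovProd S w x y ≥ min (gromovProd S w x z) (gromovProd S w y z) - δ

/-!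
The key consequence of hyperbolicity is that the centralizer of an element `g` of infinite order has
at most linear growth. Indeed, if `f` commutes with a long power `u` of `g` and is short
compared with `u`, then left multiplication by `f` almost fixes the endpoints of a geodesic from
`1` to `u`, so it moves a point `m` deep inside that geodesic to a point close to it; hence `f * m`
is determined up to bounded error by `dist 1 (f * m)`, which lies in an interval of length at most
`2 * dist 1 f`.

Linear growth forces the translation length of `g` to be positive, because the powers of `g` lie in
its centralizer. Translation length is conjugation invariant and `h ^ n` has translation length
`|n|` times that of `h`, so `h ^ q = a * h ^ p * a⁻¹` gives `|p| = |q|`. If `q = -p ≠ 0`, then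
`g = h ^ p` is inverted by `a` and commutes with `a ^ 2`. As a group of linear growth contains no
`ℤ²`, some `a ^ (2 * j)` with `j ≠ 0` is a power `g ^ i`; it is both fixed and inverted by `a`, so
it is trivial, and `a` has finite order.
-/

open Filter Topology Metric

/-! ### Gromov hyperbolic spaces -/

/-- Gromov hyperbolicity of a metric space, with the four-point condition written as an inequality
between the three sums of opposite distances instead of in terms of Gromov products. -/
def IsGromovHyperbolic (X : Type*) [PseudoMetricSpace X] (δ : ℝ) : Prop :=
  ∀ x y z w : X,
    dist x y + dist z w ≤ max (dist x z + dist y w) (dist x w + dist y z) + 2 * δ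

/-- A metric space in which any two points are joined by a geodesic with integer parameter, as in
the vertex set of a connected graph. -/
def IsDiscretelyGeodesic (X : Type*) [PseudoMetricSpace X] : Prop :=
  ∀ (x y : X) (n : ℕ), (n : ℝ) ≤ dist x y → ∃ m, dist x m = n ∧ dist m y = dist x y - n

namespace IsGromovHyperbolic

variable {X : Type*} [PseudoMetricSpace X] {δ : ℝ}

lemma nonneg [Nonempty X] (hX : IsGromovHyperbolic X δ) : 0 ≤ δ := by
  obtain ⟨x⟩ := ‹Nonempty X›
  simpa using hX x x x x

lemma le_or_le (hX : IsGromovHyperbolic X δ) (x y z w : X) :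
    dist x y + dist z w ≤ dist x z + dist y w + 2 * δ ∨
      dist x y + dist z w ≤ dist x w + dist y z + 2 * δ := by
  rw [← le_max_iff, max_add_add_right]
  exact hX x y z w

lemma dist_le_of_abs_dist_sub_dist_le (hX : IsGromovHyperbolic X δ) {x y z z' : X} {r ε : ℝ}
    (hz : dist x z + dist z y ≤ dist x y + ε) (hz' : dist x z' + dist z' y ≤ dist x y + ε)
    (hr : |dist x z - dist x z'| ≤ r) : dist z z' ≤ r + ε + 2 * δ := by
  obtain ⟨_, _⟩ := abs_le.1 hr
  rw [dist_comm z y] at hz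
  rw [dist_comm z' y] at hz'
  rcases hX.le_or_le x y z z' with h | h <;> linarith

lemma dist_add_dist_le_of_dist_endpoints_le (hX : IsGromovHyperbolic X δ) {x y x' y' m : X} {D : ℝ}
    (hx : dist x x' ≤ D) (hy : dist y y' ≤ D) (hm : dist x' m + dist m y' = dist x' y')
    (hxm : D + 2 * δ < dist x' m) (hmy : D + 2 * δ < dist m y') :
    dist x m + dist m y ≤ dist x y + 4 * δ := by
  have : Nonempty X := ⟨x⟩
  have hδ : 0 ≤ δ := hX.nonneg
  have x'_far : dist x' m ≤ dist x m + D := by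
    linarith [dist_triangle_left x' m x]
  have y'_far : dist m y' ≤ dist y m + D := by
    linarith [dist_triangle m y y', dist_comm m y]
  have between_x_y' : dist x m + dist m y' ≤ dist x y' + 2 * δ := by
    rcases hX.le_or_le x m x' y' with h | h
    · linarith
    · linarith [dist_comm m x']
  rcases hX.le_or_le y m x y' with h | h
  · linarith [dist_comm m y, dist_comm x y]
  · linarith [dist_comm m x]

end IsGromovHyperbolic

/-! ### Left-invariant metrics -/

/-- The subset `s` of a metric group has at most linear growth: the number of its elements
at distance at most `r` from `1` is `O(r + 1)`. Counting finite subsets makes local finiteness part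
of the definition. -/
def HasLinearGrowth {G : Type*} [One G] [PseudoMetricSpace G] (s : Set G) : Prop :=
  ∃ C : ℝ, ∀ F : Finset G, (F : Set G) ⊆ s → ∀ r : ℝ, 0 ≤ r → (∀ f ∈ F, dist 1 f ≤ r) →
    (F.card : ℝ) ≤ C * (r + 1)

section LeftInvariant

variable {G : Type*} [Group G] [PseudoMetricSpace G]

lemma exists_lt_dist_one_pow (hfin : ∀ r, (closedBall (1 : G) r).Finite) {g : G}
    (hg : ¬IsOfFinOrder g) (r : ℝ) : ∃ k : ℕ, r < dist 1 (g ^ k) := by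
  by_contra! hr
  refine Set.infinite_range_of_injective (injective_pow_iff_not_isOfFinOrder.2 hg)
    ((hfin r).subset ?_)
  rintro _ ⟨k, rfl⟩
  exact mem_closedBall'.2 (hr k)

variable [IsIsometricSMul G G]

lemma dist_self_mul (a b : G) : dist a (a * b) = dist 1 b := by
  simpa using dist_mul_left a 1 b

lemma dist_one_mul_le (a b : G) : dist 1 (a * b) ≤ dist 1 a + dist 1 b :=
  (dist_triangle 1 a (a * b)).trans_eq (by rw [dist_self_mul])

lemma dist_one_inv (a : G) : dist 1 a⁻¹ = dist 1 a := by
  rw [← dist_self_mul a, mul_inv_cancel, dist_comm]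

lemma dist_one_pow_le (g : G) (n : ℕ) : dist 1 (g ^ n) ≤ n * dist 1 g := by
  induction n with
  | zero => simp
  | succ n ih =>
    rw [pow_succ]
    push_cast
    linarith [dist_one_mul_le (g ^ n) g]

lemma dist_one_conj_le (a g : G) : dist 1 (a * g * a⁻¹) ≤ dist 1 g + 2 * dist 1 a := by
  linarith [dist_one_mul_le (a * g) a⁻¹, dist_one_mul_le a g, dist_one_inv a]

lemma abs_dist_one_mul_sub_le (f m : G) : |dist 1 (f * m) - dist 1 m| ≤ dist 1 f := by
  rw [← dist_mul_left f 1 m, mul_one]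
  exact abs_dist_sub_le 1 f (f * m)

lemma card_le_ncard_closedBall (hfin : ∀ r, (closedBall (1 : G) r).Finite) {F : Finset G} (m : G)
    {K : ℝ} (hF : ∀ f ∈ F, ∀ f' ∈ F, dist (f * m) (f' * m) ≤ K) :
    F.card ≤ (closedBall (1 : G) K).ncard := by
  rcases F.eq_empty_or_nonempty with rfl | ⟨f₀, hf₀⟩
  · simp
  rw [← Set.ncard_coe_finset F]
  refine Set.ncard_le_ncard_of_injOn (fun f => (f₀ * m)⁻¹ * (f * m)) (fun f hf => ?_) ?_ (hfin K)
  · rw [mem_closedBall', ← dist_self_mul (f₀ * m), mul_inv_cancel_left]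
    exact hF f₀ hf₀ f hf
  · intro f _ f' _ hff'
    simpa using hff'

/-! ### Translation length -/

lemma subadditive_dist_one_pow (g : G) : Subadditive fun n : ℕ => dist 1 (g ^ n) := by
  intro m n
  simpa only [pow_add] using dist_one_mul_le (g ^ m) (g ^ n)

/-- The stable translation length of `g`: the limit of `dist 1 (g ^ n) / n`, which exists by
Fekete's lemma. -/
noncomputable def translationLength (g : G) : ℝ :=
  (subadditive_dist_one_pow g).lim

lemma tendsto_translationLength (g : G) :
    Tendsto (fun n : ℕ => dist 1 (g ^ n) / n) atTop (𝓝 (translationLength g)) := by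
  refine (subadditive_dist_one_pow g).tendsto_lim ⟨0, ?_⟩
  rintro _ ⟨n, rfl⟩
  positivity

lemma translationLength_inv (g : G) : translationLength g⁻¹ = translationLength g := by
  refine tendsto_nhds_unique (tendsto_translationLength g⁻¹) ?_
  simpa only [inv_pow, dist_one_inv] using tendsto_translationLength g

lemma translationLength_pow (g : G) (k : ℕ) :
    translationLength (g ^ k) = k * translationLength g := by
  refine tendsto_nhds_unique (tendsto_translationLength _) ?_
  rcases k.eq_zero_or_pos with rfl | hk
  · simp
  have along_multiples : Tendsto (fun n : ℕ => k * n) atTop atTop :=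
    tendsto_id.const_mul_atTop' hk
  refine (((tendsto_translationLength g).comp along_multiples).const_mul (k : ℝ)).congr fun n => ?_
  simp only [Function.comp_apply, pow_mul, Nat.cast_mul]
  field_simp

lemma translationLength_zpow (g : G) (k : ℤ) :
    translationLength (g ^ k) = |(k : ℝ)| * translationLength g := by
  obtain ⟨n, rfl | rfl⟩ := k.eq_nat_or_neg
  · simp [translationLength_pow]
  · simp [translationLength_inv, translationLength_pow]

lemma translationLength_conj_le (a g : G) :
    translationLength (a * g * a⁻¹) ≤ translationLength g := by
  have bound : Tendsto (fun n : ℕ => dist 1 (g ^ n) / n + 2 * dist 1 a / n) atTop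
      (𝓝 (translationLength g)) := by
    simpa using (tendsto_translationLength g).add (tendsto_const_div_atTop_nhds_zero_nat _)
  refine le_of_tendsto_of_tendsto' (tendsto_translationLength _) bound fun n => ?_
  rw [← add_div, conj_pow]
  gcongr
  exact dist_one_conj_le a (g ^ n)

lemma translationLength_conj (a g : G) :
    translationLength (a * g * a⁻¹) = translationLength g := by
  refine (translationLength_conj_le a g).antisymm ?_
  simpa [mul_assoc] using translationLength_conj_le a⁻¹ (a * g * a⁻¹)

lemma exists_dist_one_pow_le_add {g : G} {ε : ℝ} (hε : translationLength g < ε) :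
    ∃ B, ∀ n : ℕ, dist 1 (g ^ n) ≤ ε * n + B := by
  have eventually_le : ∀ᶠ n : ℕ in atTop, dist 1 (g ^ n) - ε * n ≤ 0 := by
    filter_upwards [(tendsto_translationLength g).eventually_lt_const hε, eventually_gt_atTop 0]
      with n hn hn_pos
    rw [div_lt_iff₀ (by exact_mod_cast hn_pos)] at hn
    linarith
  obtain ⟨B, hB⟩ := (isBoundedUnder_of_eventually_le eventually_le).bddAbove_range
  exact ⟨B, fun n => by linarith [hB ⟨n, rfl⟩]⟩

/-! ### Sets of linear growth -/

lemma injective_pow_mul_pow {G : Type*} [Group G] {g b : G} (hg : ¬IsOfFinOrder g)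
    (hb : ∀ j : ℤ, j ≠ 0 → b ^ j ∉ Subgroup.zpowers g) :
    Function.Injective fun n : ℕ × ℕ => g ^ n.1 * b ^ n.2 := by
  rintro ⟨i, j⟩ ⟨i', j'⟩ (h : g ^ i * b ^ j = g ^ i' * b ^ j')
  have b_mem : b ^ ((j' : ℤ) - j) ∈ Subgroup.zpowers g := by
    refine ⟨-i' + i, ?_⟩
    simp only [zpow_add, zpow_neg, zpow_sub, zpow_natCast]
    rw [inv_mul_eq_iff_eq_mul, ← mul_assoc, eq_mul_inv_iff_mul_eq, h]
  obtain rfl : j' = j := by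
    by_contra hj
    exact hb _ (by omega) b_mem
  rw [injective_pow_iff_not_isOfFinOrder.2 hg (mul_right_cancel h)]

namespace HasLinearGrowth

variable {s : Set G} {g b : G}

theorem translationLength_pos (hs : HasLinearGrowth s) (hg : ¬IsOfFinOrder g)
    (hgs : ∀ n : ℕ, g ^ n ∈ s) : 0 < translationLength g := by
  classical
  obtain ⟨C, hC⟩ := hs
  obtain ⟨ε, hε, hCε⟩ := exists_pos_mul_lt one_pos C
  by_contra! hτ
  obtain ⟨B, hB⟩ := exists_dist_one_pow_le_add (hτ.trans_lt hε)
  have hB_nonneg : 0 ≤ B := by simpa using hB 0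
  have count (N : ℕ) : (N : ℝ) ≤ C * (ε * N + B + 1) := by
    have h := hC ((Finset.range N).image (g ^ ·)) (by simp [Set.subset_def, hgs]) (ε * N + B)
      (by positivity) <| by
        simp only [Finset.forall_mem_image, Finset.mem_range]
        intro n hn
        grw [hB n, hn]
    rwa [Finset.card_image_of_injective _ (injective_pow_iff_not_isOfFinOrder.2 hg),
      Finset.card_range] at h
  obtain ⟨N, hN⟩ := exists_nat_gt (C * (B + 1) / (1 - C * ε))
  rw [div_lt_iff₀ (by linarith)] at hN
  linarith [count N]

theorem exists_zpow_mem_zpowers (hs : HasLinearGrowth s) (hg : ¬IsOfFinOrder g)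
    (hgb : ∀ i j : ℕ, g ^ i * b ^ j ∈ s) : ∃ j : ℤ, j ≠ 0 ∧ b ^ j ∈ Subgroup.zpowers g := by
  classical
  by_contra! hb
  obtain ⟨C, hC⟩ := hs
  have count (N : ℕ) : (N : ℝ) * N ≤ C * (N * (dist 1 g + dist 1 b) + 1) := by
    have h := hC ((Finset.range N ×ˢ Finset.range N).image fun n => g ^ n.1 * b ^ n.2)
      (by rw [Finset.coe_image, Set.image_subset_iff]; exact fun n _ => hgb n.1 n.2)
      (N * (dist 1 g + dist 1 b)) (by positivity) <| by
        simp only [Finset.forall_mem_image, Finset.mem_product, Finset.mem_range]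
        rintro ⟨i, j⟩ ⟨hi, hj⟩
        grw [dist_one_mul_le, dist_one_pow_le, dist_one_pow_le, hi, hj, mul_add]
    rw [Finset.card_image_of_injective _ (injective_pow_mul_pow hg hb)] at h
    simpa using h
  obtain ⟨N, hN⟩ := exists_nat_gt (max 1 (|C| * (dist 1 g + dist 1 b + 1)))
  obtain ⟨hN_one, hNC⟩ := max_lt_iff.1 hN
  have : C * (N * (dist 1 g + dist 1 b) + 1) < N * N := by
    calc C * (N * (dist 1 g + dist 1 b) + 1)
        ≤ |C| * (N * (dist 1 g + dist 1 b) + N) := by grw [le_abs_self C, hN_one]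
      _ = N * (|C| * (dist 1 g + dist 1 b + 1)) := by ring
      _ < N * N := by gcongr
  exact this.not_ge (count N)

end HasLinearGrowth

theorem isOfFinOrder_of_conj_eq_inv {a g : G}
    (hlin : HasLinearGrowth (Subgroup.centralizer {g} : Set G)) (hg : ¬IsOfFinOrder g)
    (hinv : a * g * a⁻¹ = g⁻¹) : IsOfFinOrder a := by
  have semiconj : SemiconjBy a g g⁻¹ := mul_inv_eq_iff_eq_mul.1 hinv
  have sq_commute : Commute (a ^ 2) g := by
    simpa only [Commute, pow_two, inv_inv] using semiconj.inv_right.mul_left semiconj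
  obtain ⟨j, hj, i, hi : g ^ i = (a ^ 2) ^ j⟩ := hlin.exists_zpow_mem_zpowers hg fun i j =>
    Subgroup.mem_centralizer_singleton_iff.2
      (((Commute.refl g).pow_left i).mul_left (sq_commute.pow_left j))
  have self_inverse : g ^ i = (g ^ i)⁻¹ := by
    have fixed : a * g ^ i * a⁻¹ = g ^ i := by
      rw [hi]
      exact mul_inv_eq_iff_eq_mul.2 (((Commute.refl a).pow_right 2).zpow_right j)
    rw [← inv_zpow, ← hinv, conj_zpow, fixed]
  have hi_zero : i = 0 := by
    by_contra hi_ne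
    refine hg (isOfFinOrder_iff_zpow_eq_one.2 ⟨i + i, by omega, ?_⟩)
    rw [zpow_add, mul_eq_one_iff_eq_inv, ← self_inverse]
  refine isOfFinOrder_iff_zpow_eq_one.2 ⟨2 * j, by omega, ?_⟩
  rw [zpow_mul, zpow_ofNat, ← hi, hi_zero, zpow_zero]

theorem eq_of_zpow_eq_conj_zpow
    (hlin : ∀ g : G, ¬IsOfFinOrder g → HasLinearGrowth (Subgroup.centralizer {g} : Set G))
    {h a : G} (hh : ¬IsOfFinOrder h) (ha : ¬IsOfFinOrder a) {p q : ℤ}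
    (hconj : h ^ q = a * h ^ p * a⁻¹) : p = q := by
  have hτ : 0 < translationLength h := (hlin h hh).translationLength_pos hh fun n =>
    Subgroup.mem_centralizer_singleton_iff.2 ((Commute.refl h).pow_left n)
  have abs_eq : |p| = |q| := by
    have := congrArg translationLength hconj
    rw [translationLength_conj, translationLength_zpow, translationLength_zpow] at this
    exact_mod_cast (mul_right_cancel₀ hτ.ne' this).symm
  rcases abs_eq_abs.1 abs_eq with hpq | rfl
  · exact hpq
  by_contra hq
  have hg : ¬IsOfFinOrder (h ^ (-q)) := by
    intro hfin
    obtain ⟨n, hn, hn_pow⟩ := isOfFinOrder_iff_zpow_eq_one.1 hfin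
    rw [← zpow_mul] at hn_pow
    exact hh (isOfFinOrder_iff_zpow_eq_one.2 ⟨-q * n, mul_ne_zero (by omega) hn, hn_pow⟩)
  refine ha (isOfFinOrder_of_conj_eq_inv (hlin _ hg) hg ?_)
  rw [← hconj, zpow_neg, inv_inv]

/-! ### Centralizers in hyperbolic groups -/

lemma card_le_mul_of_card_le_of_abs_sub_le {α : Type*} {F : Finset α} {φ : α → ℝ} {c r : ℝ} {b : ℕ}
    (hr : 0 ≤ r) (hφ : ∀ f ∈ F, |φ f - c| ≤ r)
    (hb : ∀ E ⊆ F, (∀ f ∈ E, ∀ f' ∈ E, |φ f - φ f'| ≤ 1) → E.card ≤ b) :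
    (F.card : ℝ) ≤ b * (2 * r + 2) := by
  have floor_mem : ∀ f ∈ F, ⌊φ f⌋ ∈ Finset.Icc ⌊c - r⌋ ⌊c + r⌋ := fun f hf => by
    obtain ⟨_, _⟩ := abs_le.1 (hφ f hf)
    exact Finset.mem_Icc.2 ⟨Int.floor_mono (by linarith), Int.floor_mono (by linarith)⟩
  have card_fiber_le : ∀ k ∈ Finset.Icc ⌊c - r⌋ ⌊c + r⌋, (F.filter (⌊φ ·⌋ = k)).card ≤ b :=
    fun k _ => hb _ (F.filter_subset _) fun f hf f' hf' =>
      (Int.abs_sub_lt_one_of_floor_eq_floor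
        ((Finset.mem_filter.1 hf).2.trans (Finset.mem_filter.1 hf').2.symm)).le
  have card_floors : ((Finset.Icc ⌊c - r⌋ ⌊c + r⌋).card : ℝ) ≤ 2 * r + 2 := by
    have floor_le : ⌊c - r⌋ ≤ ⌊c + r⌋ + 1 := (Int.floor_mono (by linarith)).trans (lt_add_one _).le
    have : ((Finset.Icc ⌊c - r⌋ ⌊c + r⌋).card : ℝ) = ⌊c + r⌋ + 1 - ⌊c - r⌋ := by
      exact_mod_cast Int.card_Icc_of_le _ _ floor_le
    linarith [Int.floor_le (c + r), Int.lt_floor_add_one (c - r)]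
  calc (F.card : ℝ)
      ≤ b * (Finset.Icc ⌊c - r⌋ ⌊c + r⌋).card := by
        exact_mod_cast Finset.card_le_mul_card_image_of_maps_to floor_mem b card_fiber_le
    _ ≤ b * (2 * r + 2) := by gcongr

theorem IsGromovHyperbolic.hasLinearGrowth_centralizer {δ : ℝ} (hG : IsGromovHyperbolic G δ)
    (hgeod : IsDiscretelyGeodesic G) (hfin : ∀ r, (closedBall (1 : G) r).Finite) {g : G}
    (hg : ¬IsOfFinOrder g) : HasLinearGrowth (Subgroup.centralizer {g} : Set G) := by
  let b := (closedBall (1 : G) (1 + 4 * δ + 2 * δ)).ncard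
  refine ⟨2 * b, fun F hF r hr hFr => ?_⟩
  obtain ⟨n, hn⟩ := exists_nat_gt (r + 2 * δ)
  obtain ⟨k, hk⟩ := exists_lt_dist_one_pow hfin hg (2 * n)
  obtain ⟨m, h1m, hmu⟩ := hgeod 1 (g ^ k) n (by linarith [n.cast_nonneg (α := ℝ)])
  have near_geodesic : ∀ f ∈ F, dist 1 (f * m) + dist (f * m) (g ^ k) ≤ dist 1 (g ^ k) + 4 * δ := by
    intro f hf
    have f_comm : Commute f (g ^ k) :=
      Commute.pow_right (Subgroup.mem_centralizer_singleton_iff.1 (hF hf)) k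
    refine hG.dist_add_dist_le_of_dist_endpoints_le (x' := f * 1) (y' := f * g ^ k) (D := r)
      ?_ ?_ ?_ ?_ ?_
    · rw [mul_one]
      exact hFr f hf
    · rw [f_comm.eq, dist_self_mul]
      exact hFr f hf
    all_goals simp only [dist_mul_left]; linarith
  have card_fiber_le : ∀ E ⊆ F, (∀ f ∈ E, ∀ f' ∈ E, |dist 1 (f * m) - dist 1 (f' * m)| ≤ 1) →
      E.card ≤ b := fun E hEF hE =>
    card_le_ncard_closedBall hfin m fun f hf f' hf' =>
      hG.dist_le_of_abs_dist_sub_dist_le (near_geodesic f (hEF hf)) (near_geodesic f' (hEF hf'))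
        (hE f hf f' hf')
  calc (F.card : ℝ)
      ≤ b * (2 * r + 2) :=
        card_le_mul_of_card_le_of_abs_sub_le hr
          (fun f hf => (abs_dist_one_mul_sub_le f m).trans (hFr f hf)) card_fiber_le
    _ = 2 * b * (r + 1) := by ring

end LeftInvariant

/-! ### Word metrics -/

section WordMetric

variable {G : Type*} [Group G] {S : Set G}

lemma wordDist_le_length {x y : G} {l : List G} (hl : ∀ s ∈ l, s ∈ S ∨ s⁻¹ ∈ S)
    (hprod : l.prod = x⁻¹ * y) : wordDist S x y ≤ l.length :=
  csInf_le ⟨0, by rintro _ ⟨l, _, _, rfl⟩; positivity⟩ ⟨l, hl, hprod, rfl⟩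

lemma wordDist_nonneg (x y : G) : 0 ≤ wordDist S x y :=
  Real.sInf_nonneg (by rintro _ ⟨l, _, _, rfl⟩; positivity)

lemma wordDist_self (x : G) : wordDist S x x = 0 :=
  (wordDist_nonneg x x).antisymm' (by
    simpa using wordDist_le_length (S := S) (x := x) (y := x) (l := []) (by simp) (by simp))

lemma wordDist_mul_left (a x y : G) : wordDist S (a * x) (a * y) = wordDist S x y := by
  rw [wordDist, wordDist, show (a * x)⁻¹ * (a * y) = x⁻¹ * y by group]

lemma exists_word_prod_eq (hS : Subgroup.closure S = ⊤) (g : G) :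
    ∃ l : List G, (∀ s ∈ l, s ∈ S ∨ s⁻¹ ∈ S) ∧ l.prod = g := by
  have hg : g ∈ (Subgroup.closure S).toSubmonoid := hS ▸ Subgroup.mem_top g
  rw [Subgroup.closure_toSubmonoid] at hg
  exact Submonoid.exists_list_of_mem_closure hg

lemma exists_word_length_eq_wordDist (hS : Subgroup.closure S = ⊤) (x y : G) :
    ∃ l : List G, (∀ s ∈ l, s ∈ S ∨ s⁻¹ ∈ S) ∧ l.prod = x⁻¹ * y ∧ wordDist S x y = l.length := by
  obtain ⟨l₀, hl₀⟩ := exists_word_prod_eq hS (x⁻¹ * y)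
  obtain ⟨l, ⟨hl, hl_prod⟩, hl_min⟩ := (measure List.length).wf.has_min
    {l : List G | (∀ s ∈ l, s ∈ S ∨ s⁻¹ ∈ S) ∧ l.prod = x⁻¹ * y} ⟨l₀, hl₀⟩
  refine ⟨l, hl, hl_prod, (wordDist_le_length hl hl_prod).antisymm ?_⟩
  refine le_csInf ⟨_, l, hl, hl_prod, rfl⟩ ?_
  rintro _ ⟨l', hl', hl'_prod, rfl⟩
  exact_mod_cast not_lt.1 (hl_min l' ⟨hl', hl'_prod⟩)

lemma wordDist_triangle (hS : Subgroup.closure S = ⊤) (x y z : G) :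
    wordDist S x z ≤ wordDist S x y + wordDist S y z := by
  obtain ⟨l, hl, hl_prod, hl_length⟩ := exists_word_length_eq_wordDist hS x y
  obtain ⟨l', hl', hl'_prod, hl'_length⟩ := exists_word_length_eq_wordDist hS y z
  rw [hl_length, hl'_length, ← Nat.cast_add, ← List.length_append]
  refine wordDist_le_length (List.forall_mem_append.2 ⟨hl, hl'⟩) ?_
  rw [List.prod_append, hl_prod, hl'_prod]
  group

lemma wordDist_le_wordDist_swap (hS : Subgroup.closure S = ⊤) (x y : G) :
    wordDist S x y ≤ wordDist S y x := by
  obtain ⟨l, hl, hl_prod, hl_length⟩ := exists_word_length_eq_wordDist hS y x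
  have inv_word : ∀ s ∈ (l.map (·⁻¹)).reverse, s ∈ S ∨ s⁻¹ ∈ S := by
    simp only [List.mem_reverse, List.forall_mem_map, inv_inv]
    exact fun s hs => (hl s hs).symm
  have inv_prod : (l.map (·⁻¹)).reverse.prod = x⁻¹ * y := by
    rw [← List.prod_inv_reverse, hl_prod]
    group
  simpa [hl_length] using wordDist_le_length inv_word inv_prod

/-- The pseudometric structure on `G` whose distance is the word metric for a generating set. -/
noncomputable abbrev wordPseudoMetricSpace (hS : Subgroup.closure S = ⊤) : PseudoMetricSpace G where
  dist := wordDist S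
  dist_self := wordDist_self
  dist_comm x y := (wordDist_le_wordDist_swap hS x y).antisymm (wordDist_le_wordDist_swap hS y x)
  dist_triangle := wordDist_triangle hS

lemma exists_wordDist_eq_natCast (hS : Subgroup.closure S = ⊤) (x y : G) (n : ℕ)
    (hn : (n : ℝ) ≤ wordDist S x y) :
    ∃ m, wordDist S x m = n ∧ wordDist S m y = wordDist S x y - n := by
  obtain ⟨l, hl, hl_prod, hl_length⟩ := exists_word_length_eq_wordDist hS x y
  have hn' : n ≤ l.length := by
    rw [hl_length] at hn
    exact_mod_cast hn
  let m := x * (l.take n).prod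
  have le_left : wordDist S x m ≤ n := by
    simpa [hn'] using wordDist_le_length (x := x) (y := m) (l := l.take n)
      (fun s hs => hl s (List.mem_of_mem_take hs)) (by simp [m])
  have le_right : wordDist S m y ≤ wordDist S x y - n := by
    rw [hl_length, ← Nat.cast_sub hn', ← List.length_drop]
    refine wordDist_le_length (fun s hs => hl s (List.mem_of_mem_drop hs)) ?_
    rw [mul_inv_rev, mul_assoc, ← hl_prod, eq_inv_mul_iff_mul_eq, List.prod_take_mul_prod_drop]
  have triangle := wordDist_triangle hS x m y
  exact ⟨m, by linarith, by linarith⟩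

lemma finite_setOf_wordDist_one_le (hfin : S.Finite) (hS : Subgroup.closure S = ⊤) (r : ℝ) :
    {g : G | wordDist S 1 g ≤ r}.Finite := by
  have letters_finite : {s | s ∈ S ∨ s⁻¹ ∈ S}.Finite := hfin.union hfin.inv
  have := letters_finite.to_subtype
  refine ((List.finite_length_le {s | s ∈ S ∨ s⁻¹ ∈ S} ⌊r⌋₊).image
    fun l => (l.map Subtype.val).prod).subset fun g (hg : wordDist S 1 g ≤ r) => ?_
  obtain ⟨l, hl, hl_prod, hl_length⟩ := exists_word_length_eq_wordDist hS 1 g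
  rw [hl_length] at hg
  lift l to List {s | s ∈ S ∨ s⁻¹ ∈ S} using hl
  exact ⟨l, by simpa using Nat.le_floor hg, by simpa using hl_prod⟩

lemma wordDist_add_wordDist_le_max_add {δ : ℝ} {w x y z : G}
    (h : gromovProd S w x y ≥ min (gromovProd S w x z) (gromovProd S w y z) - δ) :
    wordDist S x y + wordDist S z w ≤
      max (wordDist S x z + wordDist S y w) (wordDist S x w + wordDist S y z) + 2 * δ := by
  rw [ge_iff_le, sub_le_iff_le_add, min_le_iff] at h
  rw [← max_add_add_right, le_max_iff]
  unfold gromovProd at h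
  rcases h with h | h
  · left; linarith
  · right; linarith

end WordMetric

theorem IsHyperbolicGroup.exists_pseudoMetricSpace {G : Type*} [Group G]
    (hG : IsHyperbolicGroup G) :
    ∃ (_ : PseudoMetricSpace G) (_ : IsIsometricSMul G G) (δ : ℝ), IsGromovHyperbolic G δ ∧
      IsDiscretelyGeodesic G ∧ ∀ r, (closedBall (1 : G) r).Finite := by
  obtain ⟨S, hfin, hS, δ, -, hδ⟩ := hG
  let _ := wordPseudoMetricSpace hS
  refine ⟨inferInstance, ⟨fun a => .of_dist_eq (wordDist_mul_left a)⟩, δ,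
    fun x y z w => wordDist_add_wordDist_le_max_add (hδ w x y z),
    exists_wordDist_eq_natCast hS, fun r => ?_⟩
  refine (finite_setOf_wordDist_one_le hfin hS r).subset fun g hg => ?_
  exact mem_closedBall'.1 hg

/-- In a hyperbolic group, if `h` has infinite order, `a` has infinite order and
`h^q = a h^p a⁻¹`, then `p = q`. -/
theorem stmt_1 {G : Type*} [Group G] (hG : IsHyperbolicGroup G)
    (h : G) (hord : ∀ n : ℤ, n ≠ 0 → h ^ n ≠ 1)
    (a : G) (aord : ∀ n : ℤ, n ≠ 0 → a ^ n ≠ 1)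
    (p q : ℤ) (hconj : h ^ q = a * h ^ p * a⁻¹) :
    p = q := by
  have not_isOfFinOrder {g : G} (hg : ∀ n : ℤ, n ≠ 0 → g ^ n ≠ 1) : ¬IsOfFinOrder g := by
    simpa [isOfFinOrder_iff_zpow_eq_one] using hg
  obtain ⟨_, _, δ, hhyp, hgeod, hfin⟩ := hG.exists_pseudoMetricSpace
  exact eq_of_zpow_eq_conj_zpow (fun _ => hhyp.hasLinearGrowth_centralizer hgeod hfin)
    (not_isOfFinOrder hord) (not_isOfFinOrder aord) hconj
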